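/- For every x = (x_1,…,x_8) ∈ ℝ⁸ with r = ‖x‖ > 0, the matrix g = (x_8·𝟙 + i x_m Γ_m)/r (sum over m = 1,…,7) is a real orthogonal 8×8 matrix of determinant 1. -/

import Mathlib

open Matrix Kronecker

/-- The Pauli matrices. -/
noncomputable def pauli : Fin 3 → Matrix (Fin 2) (Fin 2) ℂ
  | 0 => !![0, 1; 1, 0]
  | 1 => !![0, -Complex.I; Complex.I, 0]
  | 2 => !![1, 0; 0, -1]

/-- The seven 8×8 gamma matrices of the explicit Kronecker-product representation:
`Γ₁ = -σ₂⊗σ₂⊗σ₂, Γ₂ = 𝟙⊗σ₁⊗σ₂, Γ₃ = 𝟙⊗σ₃⊗σ₂, Γ₄ = -σ₁⊗σ₂⊗𝟙, Γ₅ = σ₃⊗σ₂⊗𝟙,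
Γ₆ = σ₂⊗𝟙⊗σ₁, Γ₇ = σ₂⊗𝟙⊗σ₃` (indexed here by `Fin 7`, so `Gamma 0 = Γ₁`, …). -/
noncomputable def Gamma : Fin 7 → Matrix (Fin 2 × Fin 2 × Fin 2) (Fin 2 × Fin 2 × Fin 2) ℂ
  | 0 => -(pauli 1 ⊗ₖ (pauli 1 ⊗ₖ pauli 1))
  | 1 => (1 : Matrix (Fin 2) (Fin 2) ℂ) ⊗ₖ (pauli 0 ⊗ₖ pauli 1)
  | 2 => (1 : Matrix (Fin 2) (Fin 2) ℂ) ⊗ₖ (pauli 2 ⊗ₖ pauli 1)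
  | 3 => -(pauli 0 ⊗ₖ (pauli 1 ⊗ₖ (1 : Matrix (Fin 2) (Fin 2) ℂ)))
  | 4 => pauli 2 ⊗ₖ (pauli 1 ⊗ₖ (1 : Matrix (Fin 2) (Fin 2) ℂ))
  | 5 => pauli 1 ⊗ₖ ((1 : Matrix (Fin 2) (Fin 2) ℂ) ⊗ₖ pauli 0)
  | 6 => pauli 1 ⊗ₖ ((1 : Matrix (Fin 2) (Fin 2) ℂ) ⊗ₖ pauli 2)

abbrev I8 := Fin 2 × Fin 2 × Fin 2

/-- Unnormalised matrix with arbitrary complex coefficients. -/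
noncomputable def MM (a : Fin 8 → ℂ) : Matrix I8 I8 ℂ :=
  a 7 • (1 : Matrix I8 I8 ℂ) + Complex.I • ∑ m : Fin 7, a m.castSucc • Gamma m

/-- Explicit entries of the matrix. -/
theorem MM_apply (a : Fin 8 → ℂ) (i1 i2 i3 j1 j2 j3 : Fin 2) :
    MM a (i1, i2, i3) (j1, j2, j3) =
      a 7 * ((1 : Matrix (Fin 2) (Fin 2) ℂ) i1 j1 * (1 : Matrix (Fin 2) (Fin 2) ℂ) i2 j2
        * (1 : Matrix (Fin 2) (Fin 2) ℂ) i3 j3) +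
      Complex.I * (-(a 0 * (pauli 1 i1 j1 * (pauli 1 i2 j2 * pauli 1 i3 j3)))
        + a 1 * ((1 : Matrix (Fin 2) (Fin 2) ℂ) i1 j1 * (pauli 0 i2 j2 * pauli 1 i3 j3))
        + a 2 * ((1 : Matrix (Fin 2) (Fin 2) ℂ) i1 j1 * (pauli 2 i2 j2 * pauli 1 i3 j3))
        - a 3 * (pauli 0 i1 j1 * (pauli 1 i2 j2 * (1 : Matrix (Fin 2) (Fin 2) ℂ) i3 j3))
        + a 4 * (pauli 2 i1 j1 * (pauli 1 i2 j2 * (1 : Matrix (Fin 2) (Fin 2) ℂ) i3 j3))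
        + a 5 * (pauli 1 i1 j1 * ((1 : Matrix (Fin 2) (Fin 2) ℂ) i2 j2 * pauli 0 i3 j3))
        + a 6 * (pauli 1 i1 j1 * ((1 : Matrix (Fin 2) (Fin 2) ℂ) i2 j2 * pauli 2 i3 j3))) := by
  have h1 : (1 : Matrix I8 I8 ℂ) (i1, i2, i3) (j1, j2, j3) =
      (1 : Matrix (Fin 2) (Fin 2) ℂ) i1 j1 * (1 : Matrix (Fin 2) (Fin 2) ℂ) i2 j2
        * (1 : Matrix (Fin 2) (Fin 2) ℂ) i3 j3 := by
    rw [← Matrix.one_kronecker_one, ← Matrix.one_kronecker_one]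
    simp only [Matrix.kroneckerMap_apply, mul_assoc]
  have h2 : MM a (i1, i2, i3) (j1, j2, j3) =
      a 7 * (1 : Matrix I8 I8 ℂ) (i1, i2, i3) (j1, j2, j3) +
      Complex.I * ∑ m : Fin 7, a m.castSucc * Gamma m (i1, i2, i3) (j1, j2, j3) := by
    simp only [MM, Matrix.add_apply, Matrix.smul_apply, Matrix.sum_apply, smul_eq_mul]
  rw [h2, h1, Fin.sum_univ_seven]
  simp only [Gamma, Matrix.neg_apply, Matrix.kroneckerMap_apply]
  change _ + Complex.I * (a 0 * _ + a 1 * _ + a 2 * _ + a 3 * _ + a 4 * _ + a 5 * _ + a 6 * _) = _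
  ring

theorem MM_transpose (a : Fin 8 → ℂ) : (MM a)ᵀ = (2 * a 7) • (1 : Matrix I8 I8 ℂ) - MM a := by
  ext ⟨i1, i2, i3⟩ ⟨j1, j2, j3⟩
  simp only [Matrix.transpose_apply, Matrix.sub_apply, Matrix.smul_apply, MM_apply]
  fin_cases i1 <;> fin_cases i2 <;> fin_cases i3 <;>
  fin_cases j1 <;> fin_cases j2 <;> fin_cases j3 <;>
  simp [pauli, Matrix.one_apply] <;> ring

set_option maxHeartbeats 8000000 in
theorem MM_mul (a : Fin 8 → ℂ) :
    (MM a)ᵀ * MM a = (∑ m, a m ^ 2) • (1 : Matrix I8 I8 ℂ) := by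
  have hI : Complex.I ^ 2 = -1 := Complex.I_sq
  ext ⟨i1, i2, i3⟩ ⟨j1, j2, j3⟩
  simp only [Matrix.mul_apply, Fintype.sum_prod_type, Fin.sum_univ_two, Fin.sum_univ_eight,
    Matrix.transpose_apply, Matrix.smul_apply, MM_apply]
  fin_cases i1 <;> fin_cases i2 <;> fin_cases i3 <;>
  fin_cases j1 <;> fin_cases j2 <;> fin_cases j3 <;>
  simp [pauli, Matrix.one_apply, mul_add, ← mul_assoc, mul_right_comm Complex.I] <;>
  grind

theorem MM_real (y : Fin 8 → ℝ) (i j : I8) : (MM (fun m => (y m : ℂ)) i j).im = 0 := by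
  obtain ⟨i1, i2, i3⟩ := i
  obtain ⟨j1, j2, j3⟩ := j
  rw [MM_apply]
  fin_cases i1 <;> fin_cases i2 <;> fin_cases i3 <;>
  fin_cases j1 <;> fin_cases j2 <;> fin_cases j3 <;>
  simp [pauli, Matrix.one_apply]

theorem MM_det_sq (a : Fin 8 → ℂ) : (MM a).det ^ 2 = (∑ m, a m ^ 2) ^ 8 := by
  have h := congrArg Matrix.det (MM_mul a)
  rw [Matrix.det_mul, Matrix.det_transpose, Matrix.det_smul, Matrix.det_one] at h
  simpa [sq] using h

theorem MM_add (a : Fin 8 → ℂ) (r : ℂ) :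
    MM (fun m => if m = 7 then a 7 + r else a m) = MM a + r • (1 : Matrix I8 I8 ℂ) := by
  ext ⟨i1, i2, i3⟩ ⟨j1, j2, j3⟩
  have h1 : (1 : Matrix I8 I8 ℂ) (i1, i2, i3) (j1, j2, j3) =
      (1 : Matrix (Fin 2) (Fin 2) ℂ) i1 j1 * (1 : Matrix (Fin 2) (Fin 2) ℂ) i2 j2
        * (1 : Matrix (Fin 2) (Fin 2) ℂ) i3 j3 := by
    rw [← Matrix.one_kronecker_one, ← Matrix.one_kronecker_one]
    simp only [Matrix.kroneckerMap_apply, mul_assoc]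
  rw [Matrix.add_apply, Matrix.smul_apply, h1, MM_apply, MM_apply]
  simp only [Fin.reduceEq, if_true, if_false, smul_eq_mul]
  ring

theorem MM_det (a : Fin 8 → ℂ) (r : ℂ) (hr : ∑ m, a m ^ 2 = r ^ 2) (h : a 7 + r ≠ 0) :
    (MM a).det = r ^ 8 := by
  have h1 : (MM a + r • (1 : Matrix I8 I8 ℂ)) * (MM a + r • (1 : Matrix I8 I8 ℂ))
      = (2 * (a 7 + r)) • MM a := by
    have h2 := MM_mul a
    rw [MM_transpose, hr, sub_mul, smul_mul_assoc, one_mul] at h2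
    have h3 : MM a * MM a = (2 * a 7) • MM a - r ^ 2 • (1 : Matrix I8 I8 ℂ) := by
      rw [← h2]; abel
    rw [add_mul, mul_add, mul_add, h3]
    simp only [smul_mul_assoc, mul_smul_comm, one_mul, mul_one]
    module
  have h4 := congrArg Matrix.det h1
  rw [Matrix.det_mul, ← MM_add, ← sq, MM_det_sq, Matrix.det_smul] at h4
  have h5 : ∑ m, (fun m => if m = 7 then a 7 + r else a m) m ^ 2 = (2 * (a 7 + r)) * r := by
    rw [Fin.sum_univ_eight] at hr ⊢
    simp only [Fin.reduceEq, if_true, if_false]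
    linear_combination hr
  rw [h5] at h4
  have hc : Fintype.card I8 = 8 := by simp
  rw [hc, mul_pow] at h4
  exact (mul_left_cancel₀ (pow_ne_zero 8 (mul_ne_zero two_ne_zero h)) h4).symm

/-- For `x ∈ ℝ⁸` with `r = ‖x‖ > 0`, the matrix `g = (x₈·𝟙 + i xₘ Γₘ)/r` is a real
orthogonal matrix of determinant 1: all its entries are real, `gᵀ g = 𝟙`, and `det g = 1`. -/
theorem g8_orthogonal (x : EuclideanSpace ℝ (Fin 8)) (hx : ‖x‖ > 0) :
    let g : Matrix (Fin 2 × Fin 2 × Fin 2) (Fin 2 × Fin 2 × Fin 2) ℂ :=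
      (‖x‖ : ℂ)⁻¹ •
        ((x 7 : ℂ) • (1 : Matrix (Fin 2 × Fin 2 × Fin 2) (Fin 2 × Fin 2 × Fin 2) ℂ) +
          Complex.I • ∑ m : Fin 7, (x m.castSucc : ℂ) • Gamma m)
    (∀ i j, (g i j).im = 0) ∧ gᵀ * g = 1 ∧ g.det = 1 := by
  have hn : ∑ m, x m ^ 2 = ‖x‖ ^ 2 := by
    rw [EuclideanSpace.norm_sq_eq]; simp
  have hc : ∑ m, (x m : ℂ) ^ 2 = (‖x‖ : ℂ) ^ 2 := by exact_mod_cast hn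
  have hr : (‖x‖ : ℂ) ≠ 0 := by exact_mod_cast hx.ne'
  intro g
  have hg : g = (‖x‖ : ℂ)⁻¹ • MM (fun m => (x m : ℂ)) := rfl
  have hdet : (MM (fun m => (x m : ℂ))).det = (‖x‖ : ℂ) ^ 8 := by
    by_cases h : (x 7 : ℂ) + (‖x‖ : ℂ) = 0
    · have h' : x 7 = -‖x‖ := by
        have : x 7 + ‖x‖ = (0 : ℝ) := by
          rw [← Complex.ofReal_add] at h
          exact Complex.ofReal_eq_zero.1 h
        linarith
      have hz : ∀ m : Fin 7, x m.castSucc = 0 := by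
        intro m
        rw [Fin.sum_univ_castSucc] at hn
        change _ + x 7 ^ 2 = _ at hn
        have h0 : ∑ m : Fin 7, x m.castSucc ^ 2 = 0 := by
          rw [h'] at hn; linarith
        have := (Finset.sum_eq_zero_iff_of_nonneg (fun i _ => sq_nonneg _)).1 h0 m
          (Finset.mem_univ _)
        exact pow_eq_zero_iff two_ne_zero |>.1 this
      have hM : MM (fun m => (x m : ℂ)) = (-(‖x‖ : ℂ)) • (1 : Matrix I8 I8 ℂ) := by
        simp [MM, hz, h']
      rw [hM, Matrix.det_smul]
      simp only [Fintype.card_prod, Fintype.card_fin, Matrix.det_one]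
      ring
    · exact MM_det _ _ hc h
  refine ⟨fun i j => ?_, ?_, ?_⟩
  · rw [hg, Matrix.smul_apply, smul_eq_mul, ← Complex.ofReal_inv, Complex.im_ofReal_mul,
      MM_real, mul_zero]
  · rw [hg, Matrix.transpose_smul, smul_mul_assoc, mul_smul_comm, MM_mul, hc, smul_smul, smul_smul]
    have : (‖x‖ : ℂ)⁻¹ * (‖x‖ : ℂ)⁻¹ * (‖x‖ : ℂ) ^ 2 = 1 := by field_simp
    rw [this, one_smul]
  · rw [hg, Matrix.det_smul, hdet]
    have hcard : Fintype.card (Fin 2 × Fin 2 × Fin 2) = 8 := by simp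
    rw [hcard, ← mul_pow, inv_mul_cancel₀ hr, one_pow]
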